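/- Assume n ≤ m and let i be an integer with 1 ≤ i ≤ 2N−1 and i ≠ N. Then det A₁ ≠ 0 and the polynomial q¹ᵢ = (det A₁)^{−1}·det A is a quasi-invariant of the form ∑_{s=0}^{m+n} aₛ·z^{(m+n−s)N+i}·w^{Ns} with a₀ = 1. Moreover, if Ā denotes the matrix obtained from A by replacing each entry z^{(m+n−s)N+i}·w^{Ns} of row 0 by w^{(m+n−s)N+i}·z^{Ns}, then q²ᵢ = (det A₁)^{−1}·det Ā is a quasi-invariant of the form ∑_{s=0}^{m+n} bₛ·w^{(m+n−s)N+i}·z^{Ns} with b₀ = 1. -/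

import Mathlib

open MvPolynomial Finset

noncomputable section

/-- The polynomial ring `R = ℂ[z,w]`. -/
abbrev R2 : Type := MvPolynomial (Fin 2) ℂ

/-- `z`, the first variable. -/
def zP : R2 := X 0

/-- `w`, the second variable (playing the role of `z̄`). -/
def wP : R2 := X 1

/-- `ε = exp(πi/N)`, a primitive `2N`-th root of unity. -/
def eps (N : ℕ) : ℂ := Complex.exp ((Real.pi : ℂ) * Complex.I / (N : ℂ))

/-- The reflection `σⱼ : z ↦ ε^j w, w ↦ ε^{-j} z` as a `ℂ`-algebra endomorphism. -/
def dihRefl (N j : ℕ) : R2 →ₐ[ℂ] R2 :=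
  aeval (fun k : Fin 2 => if k = 0 then C (eps N ^ j) * X 1 else C (eps N ^ (-(j : ℤ))) * X 0)

/-- The multiplicity `mⱼ`: `m` for even `j`, `n` for odd `j`. -/
def mult (m n j : ℕ) : ℕ := if Even j then m else n

/-- Quasi-invariance for the dihedral system `I₂(2N)` with multiplicities `(m,n)`. -/
def IsQuasiInv (N m n : ℕ) (p : R2) : Prop :=
  ∀ j < 2 * N, (zP - C (eps N ^ j) * wP) ^ (2 * mult m n j + 1) ∣ dihRefl N j p - p

/-- `cₛ = (m+n−2s)·N + i`, as a complex number. -/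
def cVal (N m n i s : ℕ) : ℂ := ((m : ℂ) + n - 2 * s) * N + i

/-- The scalar entry of the matrix `A = A(i)` in row `t ≥ 1` and column `s` (both `0`-based):
rows `1,…,n` have entries `cₛ^{2t−1}` at even `s` and `0` at odd `s`;
rows `n+1,…,2n` have entries `cₛ^{2(t−n)−1}` at odd `s` and `0` at even `s`;
rows `2n+1,…,n+m` have entries `cₛ^{2(t−n)−1}`. -/
def Aentry (N m n i : ℕ) (t s : ℕ) : ℂ :=
  if t ≤ n then (if Even s then cVal N m n i s ^ (2 * t - 1) else 0)
  else if t ≤ 2 * n then (if ¬ Even s then cVal N m n i s ^ (2 * (t - n) - 1) else 0)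
  else cVal N m n i s ^ (2 * (t - n) - 1)

/-- The matrix `A₁`: the matrix `A(i)` with row `0` and column `0` deleted. -/
def A1mat (N m n i : ℕ) : Matrix (Fin (m + n)) (Fin (m + n)) ℂ :=
  Matrix.of fun t s => Aentry N m n i ((t : ℕ) + 1) ((s : ℕ) + 1)

/-- The full `(m+n+1)×(m+n+1)` matrix `A = A(i)` over `R`: row `0` consists of the
monomials `z^{(m+n−s)N+i}·w^{Ns}`, the remaining rows are the scalar rows. -/
def Amat (N m n i : ℕ) : Matrix (Fin (m + n + 1)) (Fin (m + n + 1)) R2 :=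
  Matrix.of fun t s =>
    if (t : ℕ) = 0 then zP ^ ((m + n - (s : ℕ)) * N + i) * wP ^ (N * (s : ℕ))
    else C (Aentry N m n i (t : ℕ) (s : ℕ))

/-- The matrix `Ā`: `A` with row `0` replaced by the monomials `w^{(m+n−s)N+i}·z^{Ns}`. -/
def AmatBar (N m n i : ℕ) : Matrix (Fin (m + n + 1)) (Fin (m + n + 1)) R2 :=
  Matrix.of fun t s =>
    if (t : ℕ) = 0 then wP ^ ((m + n - (s : ℕ)) * N + i) * zP ^ (N * (s : ℕ))
    else C (Aentry N m n i (t : ℕ) (s : ℕ))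

def Lam (h c0 e : ℂ) (f : ℂ → ℂ) (q : Polynomial ℂ) : ℂ :=
  q.sum (fun s a => a * (e ^ s * f (c0 - h * s)))

def theta (h c0 : ℂ) (q : Polynomial ℂ) : Polynomial ℂ :=
  Polynomial.C c0 * q - Polynomial.C h * (Polynomial.X * Polynomial.derivative q)

lemma Lam_add (h c0 e : ℂ) (f : ℂ → ℂ) (p q : Polynomial ℂ) :
    Lam h c0 e f (p + q) = Lam h c0 e f p + Lam h c0 e f q := by
  unfold Lam
  exact Polynomial.sum_add_index p q _ (by simp) (by intros; ring)

lemma Lam_C_mul (h c0 e : ℂ) (f : ℂ → ℂ) (a : ℂ) (q : Polynomial ℂ) :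
    Lam h c0 e f (Polynomial.C a * q) = a * Lam h c0 e f q := by
  unfold Lam
  rw [← Polynomial.smul_eq_C_mul, Polynomial.sum_smul_index _ _ _ (by simp)]
  simp [Polynomial.sum_def, Finset.mul_sum, mul_assoc]

lemma Lam_sub (h c0 e : ℂ) (f : ℂ → ℂ) (p q : Polynomial ℂ) :
    Lam h c0 e f (p - q) = Lam h c0 e f p - Lam h c0 e f q := by
  have : p - q = p + Polynomial.C (-1) * q := by simp [sub_eq_add_neg]
  rw [this, Lam_add, Lam_C_mul]; ring

lemma Lam_monomial (h c0 e : ℂ) (f : ℂ → ℂ) (s : ℕ) (a : ℂ) :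
    Lam h c0 e f (Polynomial.monomial s a) = a * (e ^ s * f (c0 - h * s)) := by
  unfold Lam
  exact Polynomial.sum_monomial_index _ _ (by simp)

lemma Lam_X_mul (h c0 e : ℂ) (f : ℂ → ℂ) (q : Polynomial ℂ) :
    Lam h c0 e f (Polynomial.X * q) = e * Lam h c0 e (fun c => f (c - h)) q := by
  induction q using Polynomial.induction_on' with
  | add p q hp hq => rw [mul_add, Lam_add, Lam_add, hp, hq, mul_add]
  | monomial s a =>
    rw [Polynomial.X_mul_monomial, Lam_monomial, Lam_monomial]
    have : c0 - h * ((s + 1 : ℕ) : ℂ) = c0 - h * s - h := by push_cast; ring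
    rw [this]; ring

lemma theta_coeff (h c0 : ℂ) (q : Polynomial ℂ) (s : ℕ) :
    (theta h c0 q).coeff s = (c0 - h * s) * q.coeff s := by
  unfold theta
  rw [Polynomial.coeff_sub, Polynomial.coeff_C_mul, Polynomial.coeff_C_mul]
  cases s with
  | zero => simp
  | succ s => rw [Polynomial.coeff_X_mul, Polynomial.coeff_derivative]; push_cast; ring

lemma theta_add (h c0 : ℂ) (p q : Polynomial ℂ) :
    theta h c0 (p + q) = theta h c0 p + theta h c0 q := by
  ext s; simp only [theta_coeff, Polynomial.coeff_add]; ring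

lemma Lam_theta (h c0 e : ℂ) (f : ℂ → ℂ) (q : Polynomial ℂ) :
    Lam h c0 e f (theta h c0 q) = Lam h c0 e (fun c => c * f c) q := by
  induction q using Polynomial.induction_on' with
  | add p q hp hq => rw [theta_add, Lam_add, Lam_add, hp, hq]
  | monomial s a =>
    have : theta h c0 (Polynomial.monomial s a) = Polynomial.monomial s ((c0 - h * s) * a) := by
      ext t
      rw [theta_coeff, Polynomial.coeff_monomial, Polynomial.coeff_monomial]
      split_ifs with hst
      · rw [hst]
      · simp
    rw [this, Lam_monomial, Lam_monomial]; ring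

lemma Lam_fun_lin (h c0 e : ℂ) (f g : ℂ → ℂ) (a b : ℂ) (q : Polynomial ℂ) :
    Lam h c0 e (fun c => a * f c + b * g c) q = a * Lam h c0 e f q + b * Lam h c0 e g q := by
  unfold Lam
  simp only [Polynomial.sum_def, Finset.mul_sum, ← Finset.sum_add_distrib]
  exact Finset.sum_congr rfl (fun _ _ => by ring)

lemma Lam_poly (h c0 e : ℂ) (P : Polynomial ℂ) (q : Polynomial ℂ) :
    Lam h c0 e (fun c => P.eval c) q = P.sum (fun k a => a * Lam h c0 e (fun c => c ^ k) q) := by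
  unfold Lam
  simp only [Polynomial.sum_def, Polynomial.eval_eq_sum, Finset.mul_sum]
  rw [Finset.sum_comm]
  exact Finset.sum_congr rfl (fun _ _ => Finset.sum_congr rfl (fun _ _ => by ring))

/-- all odd moments below `2k` vanish -/
def Mom (h c0 e : ℂ) (k : ℕ) (q : Polynomial ℂ) : Prop :=
  ∀ t < k, Lam h c0 e (fun c => c ^ (2 * t + 1)) q = 0

lemma Mom_poly {h c0 e : ℂ} {k : ℕ} {q : Polynomial ℂ} (H : Mom h c0 e k q) (P : Polynomial ℂ)
    (h1 : ∀ t, P.coeff (2 * t) = 0) (h2 : ∀ t, k ≤ t → P.coeff (2 * t + 1) = 0) :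
    Lam h c0 e (fun c => P.eval c) q = 0 := by
  rw [Lam_poly, Polynomial.sum_def]
  refine Finset.sum_eq_zero (fun j _ => ?_)
  rcases Nat.even_or_odd' j with ⟨t, rfl | rfl⟩
  · rw [h1]; simp
  · by_cases ht : t < k
    · rw [H t ht]; simp
    · rw [h2 t (by omega)]; simp

def rhsP (h c0 A B : ℂ) (p : Polynomial ℂ) : Polynomial ℂ :=
  (theta h c0 (theta h c0 p) - Polynomial.X * (Polynomial.X * theta h c0 (theta h c0 p)))
  - (Polynomial.C (h * A) * theta h c0 p + Polynomial.C (h * (2 * B)) * (Polynomial.X * theta h c0 p)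
    + Polynomial.C (h * A) * (Polynomial.X * (Polynomial.X * theta h c0 p)))

lemma key_identity (h c0 e A B : ℂ) (he : e * e = 1) (p b : Polynomial ℂ)
    (hb : b - Polynomial.X * (Polynomial.X * b) = rhsP h c0 A B p) (R : ℂ → ℂ) :
    Lam h c0 e (fun c => R (c + h) - R (c - h)) b =
    Lam h c0 e (fun c => c ^ 2 * (R (c + h) - R (c - h))
      - h * A * (c * (R (c + h) + R (c - h))) - 2 * h * e * B * (c * R c)) p := by
  have H := congrArg (Lam h c0 e (fun c => R (c + h))) hb
  unfold rhsP at H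
  simp only [Lam_sub, Lam_add, Lam_C_mul, Lam_X_mul, Lam_theta] at H
  have e1 : ∀ c : ℂ, c - h - h + h = c - h := fun c => by ring
  have e2 : ∀ c : ℂ, c - h + h = c := fun c => by ring
  simp only [e1, e2] at H
  have he' : ∀ x : ℂ, e * (e * x) = x := fun x => by rw [← mul_assoc, he, one_mul]
  simp only [he'] at H
  have L1 : Lam h c0 e (fun c => R (c + h) - R (c - h)) b =
      Lam h c0 e (fun c => R (c + h)) b - Lam h c0 e (fun c => R (c - h)) b := by
    have := Lam_fun_lin h c0 e (fun c => R (c + h)) (fun c => R (c - h)) 1 (-1) b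
    simpa [sub_eq_add_neg] using this
  rw [L1, H]
  unfold Lam
  simp only [Polynomial.sum_def, Finset.mul_sum, ← Finset.sum_add_distrib, ← Finset.sum_sub_distrib]
  exact Finset.sum_congr rfl (fun _ _ => by ring)

/-- `(X+h)^(2l) - (X-h)^(2l)` -/
def Kp (h : ℂ) (l : ℕ) : Polynomial ℂ :=
  (Polynomial.X + Polynomial.C h) ^ (2 * l) - (Polynomial.X + Polynomial.C (-h)) ^ (2 * l)
def Kq (h : ℂ) (l : ℕ) : Polynomial ℂ :=
  (Polynomial.X + Polynomial.C h) ^ (2 * l) + (Polynomial.X + Polynomial.C (-h)) ^ (2 * l)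

lemma Kp_even (h : ℂ) (l t : ℕ) : (Kp h l).coeff (2 * t) = 0 := by
  unfold Kp
  rw [Polynomial.coeff_sub, Polynomial.coeff_X_add_C_pow, Polynomial.coeff_X_add_C_pow,
    ← Nat.mul_sub, Even.neg_pow (by simp)]
  simp
lemma Kp_high (h : ℂ) (l t : ℕ) (ht : l ≤ t) : (Kp h l).coeff (2 * t + 1) = 0 := by
  unfold Kp
  rw [Polynomial.coeff_sub, Polynomial.coeff_X_add_C_pow, Polynomial.coeff_X_add_C_pow,
    Nat.choose_eq_zero_of_lt (by omega)]
  simp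
lemma Kp_lead (h : ℂ) (l : ℕ) : (Kp h (l + 1)).coeff (2 * l + 1) = 4 * (l + 1) * h := by
  unfold Kp
  rw [Polynomial.coeff_sub, Polynomial.coeff_X_add_C_pow, Polynomial.coeff_X_add_C_pow]
  have : 2 * (l + 1) - (2 * l + 1) = 1 := by omega
  have h2 : (2 * (l + 1)).choose (2 * l + 1) = 2 * (l + 1) := by
    rw [show 2 * (l + 1) = (2 * l + 1) + 1 by ring, Nat.choose_succ_self_right]
  rw [this, h2]; push_cast; ring
lemma Kq_odd (h : ℂ) (l t : ℕ) : (Kq h l).coeff (2 * t + 1) = 0 := by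
  unfold Kq
  rw [Polynomial.coeff_add, Polynomial.coeff_X_add_C_pow, Polynomial.coeff_X_add_C_pow]
  by_cases ht : 2 * t + 1 ≤ 2 * l
  · rw [Odd.neg_pow ⟨l - t - 1, by omega⟩]; ring
  · rw [Nat.choose_eq_zero_of_lt (by omega)]; simp
lemma Kq_high (h : ℂ) (l t : ℕ) (ht : l < t) : (Kq h l).coeff (2 * t) = 0 := by
  unfold Kq
  rw [Polynomial.coeff_add, Polynomial.coeff_X_add_C_pow, Polynomial.coeff_X_add_C_pow,
    Nat.choose_eq_zero_of_lt (by omega)]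
  simp
lemma Kq_lead (h : ℂ) (l : ℕ) : (Kq h l).coeff (2 * l) = 2 := by
  unfold Kq
  rw [Polynomial.coeff_add, Polynomial.coeff_X_add_C_pow, Polynomial.coeff_X_add_C_pow]
  norm_num

/-- The polynomial `S`. -/
def Sp (h e A B : ℂ) (l : ℕ) : Polynomial ℂ :=
  Polynomial.X ^ 2 * Kp h (l + 1) - Polynomial.C (h * A) * (Polynomial.X * Kq h (l + 1))
    - Polynomial.C (2 * h * e * B) * Polynomial.X ^ (2 * l + 3)

lemma Sp_even (h e A B : ℂ) (l t : ℕ) : (Sp h e A B l).coeff (2 * t) = 0 := by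
  unfold Sp
  rw [Polynomial.coeff_sub, Polynomial.coeff_sub, Polynomial.coeff_C_mul, Polynomial.coeff_C_mul,
    Polynomial.coeff_X_pow, if_neg (by omega), Polynomial.coeff_X_pow_mul']
  cases t with
  | zero => simp
  | succ t =>
    rw [if_pos (by omega), show 2 * (t + 1) - 2 = 2 * t by omega, Kp_even,
      show 2 * (t + 1) = 2 * t + 1 + 1 by ring, Polynomial.coeff_X_mul, Kq_odd]; simp

lemma Sp_high (h e A B : ℂ) (k l t : ℕ) (hl : l < k) (ht : k ≤ t) (hAB : A + e * B = 2 * k) :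
    (Sp h e A B l).coeff (2 * t + 1) = 0 := by
  unfold Sp
  obtain ⟨t, rfl⟩ : ∃ t', t = t' + 1 := ⟨t - 1, by omega⟩
  rw [Polynomial.coeff_sub, Polynomial.coeff_sub, Polynomial.coeff_C_mul, Polynomial.coeff_C_mul,
    Polynomial.coeff_X_pow, Polynomial.coeff_X_pow_mul', if_pos (by omega),
    Polynomial.coeff_X_mul, show 2 * (t + 1) + 1 - 2 = 2 * t + 1 by omega]
  rcases (show l ≤ t by omega).eq_or_lt with rfl | hlt
  · rw [if_pos (by ring), Kp_lead, Kq_lead]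
    have : k = l + 1 := by omega
    subst this
    push_cast at hAB
    linear_combination (-2 * h) * hAB
  · rw [if_neg (by omega), Kp_high _ _ _ (by omega), Kq_high _ _ _ (by omega)]; simp

lemma Mom_step (h c0 e A B : ℂ) (hh : h ≠ 0) (he : e * e = 1) (p b : Polynomial ℂ) (k : ℕ)
    (hAB : A + e * B = 2 * k)
    (hb : b - Polynomial.X * (Polynomial.X * b) = rhsP h c0 A B p) (H : Mom h c0 e k p) :
    Mom h c0 e k b := by
  suffices ∀ l ≤ k, Mom h c0 e l b from this k le_rfl
  intro l
  induction l with
  | zero => intro _ t ht; omega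
  | succ l ih =>
    intro hl
    have ihl := ih (by omega)
    intro t ht
    rcases (show t ≤ l by omega).eq_or_lt with rfl | hlt
    swap
    · exact ihl t hlt
    have K := key_identity h c0 e A B he p b hb (fun c => c ^ (2 * (t + 1)))
    have E1 : Lam h c0 e (fun c => (Sp h e A B t).eval c) p = 0 :=
      Mom_poly H _ (Sp_even _ _ _ _ _) (fun t' ht' => Sp_high h e A B k t t' (by omega) ht' hAB)
    have E2 : (fun c : ℂ => c ^ 2 * ((c + h) ^ (2 * (t + 1)) - (c - h) ^ (2 * (t + 1)))
      - h * A * (c * ((c + h) ^ (2 * (t + 1)) + (c - h) ^ (2 * (t + 1))))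
      - 2 * h * e * B * (c * c ^ (2 * (t + 1)))) = (fun c => (Sp h e A B t).eval c) := by
      funext c
      simp only [Sp, Kp, Kq, Polynomial.eval_sub, Polynomial.eval_add, Polynomial.eval_mul,
        Polynomial.eval_pow, Polynomial.eval_X, Polynomial.eval_C]
      ring
    rw [E2, E1] at K
    have E3 : Lam h c0 e (fun c => (Kp h (t + 1) - Polynomial.C (4 * (t + 1) * h) *
        Polynomial.X ^ (2 * t + 1)).eval c) b = 0 := by
      apply Mom_poly ihl
      · intro j
        rw [Polynomial.coeff_sub, Kp_even, Polynomial.coeff_C_mul, Polynomial.coeff_X_pow,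
          if_neg (by omega)]; simp
      · intro j hj
        rw [Polynomial.coeff_sub, Polynomial.coeff_C_mul, Polynomial.coeff_X_pow]
        rcases hj.eq_or_lt with rfl | hj
        · rw [Kp_lead]; simp
        · rw [Kp_high _ _ _ (by omega), if_neg (by omega)]; simp
    have E4 := Lam_fun_lin h c0 e (fun c => (c + h) ^ (2 * (t + 1)) - (c - h) ^ (2 * (t + 1)))
      (fun c => c ^ (2 * t + 1)) 1 (-(4 * (t + 1) * h)) b
    rw [K] at E4
    have E5 : (fun c : ℂ => (1 : ℂ) * ((c + h) ^ (2 * (t + 1)) - (c - h) ^ (2 * (t + 1)))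
        + (-(4 * (t + 1) * h)) * c ^ (2 * t + 1)) = fun c => (Kp h (t + 1) -
        Polynomial.C (4 * (t + 1) * h) * Polynomial.X ^ (2 * t + 1)).eval c := by
      funext c
      simp only [Kp, Polynomial.eval_sub, Polynomial.eval_add, Polynomial.eval_mul,
        Polynomial.eval_pow, Polynomial.eval_X, Polynomial.eval_C]
      ring
    rw [E5, E3] at E4
    have hne : (4 * ((t : ℂ) + 1) * h) ≠ 0 := by
      have : (t : ℂ) + 1 ≠ 0 := by exact_mod_cast Nat.succ_ne_zero t
      exact mul_ne_zero (mul_ne_zero (by norm_num) this) hh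
    have : (4 * ((t : ℂ) + 1) * h) * Lam h c0 e (fun c => c ^ (2 * t + 1)) b = 0 := by
      linear_combination E4
    exact (mul_eq_zero.mp this).resolve_left hne

lemma eval_eq_Lam (h c0 e : ℂ) (q : Polynomial ℂ) :
    q.eval e = Lam h c0 e (fun _ => 1) q := by
  unfold Lam; rw [Polynomial.eval_eq_sum]; simp

lemma eval_theta (h c0 e : ℂ) (k : ℕ) (hk : k ≠ 0) (q : Polynomial ℂ) (H : Mom h c0 e k q) :
    (theta h c0 q).eval e = 0 := by
  rw [eval_eq_Lam h c0, Lam_theta]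
  have := H 0 (by omega)
  simpa using this

lemma rhsP_eval (h c0 A B e : ℂ) (k : ℕ) (he : e * e = 1) (hAB : A + e * B = 2 * k)
    (p : Polynomial ℂ) (H : Mom h c0 e k p) : (rhsP h c0 A B p).eval e = 0 := by
  have key : (k : ℂ) * (theta h c0 p).eval e = 0 := by
    rcases eq_or_ne k 0 with rfl | hk
    · simp
    · rw [eval_theta h c0 e k hk p H, mul_zero]
  simp only [rhsP, Polynomial.eval_sub, Polynomial.eval_add, Polynomial.eval_mul,
    Polynomial.eval_X, Polynomial.eval_C]
  linear_combination (-(Polynomial.eval e (theta h c0 (theta h c0 p)))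
    - h * A * Polynomial.eval e (theta h c0 p)) * he
    - 2 * h * Polynomial.eval e (theta h c0 p) * hAB - 4 * h * key

lemma exists_b (h c0 A B : ℂ) (m n M : ℕ) (h1 : A + 1 * B = 2 * m) (h2 : A + (-1) * B = 2 * n)
    (p : Polynomial ℂ) (hp : p.natDegree ≤ M) (H1 : Mom h c0 1 m p) (H2 : Mom h c0 (-1) n p) :
    ∃ b : Polynomial ℂ, b - Polynomial.X * (Polynomial.X * b) = rhsP h c0 A B p ∧
      b.natDegree ≤ M := by
  have d1 : (Polynomial.X - Polynomial.C 1) ∣ rhsP h c0 A B p :=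
    Polynomial.dvd_iff_isRoot.mpr (rhsP_eval h c0 A B 1 m (by norm_num) h1 p H1)
  have d2 : (Polynomial.X - Polynomial.C (-1)) ∣ rhsP h c0 A B p :=
    Polynomial.dvd_iff_isRoot.mpr (rhsP_eval h c0 A B (-1) n (by norm_num) h2 p H2)
  have cop : IsCoprime (Polynomial.X - Polynomial.C (1 : ℂ)) (Polynomial.X - Polynomial.C (-1)) :=
    Polynomial.isCoprime_X_sub_C_of_isUnit_sub (by norm_num)
  obtain ⟨q, hq⟩ := cop.mul_dvd d1 d2
  refine ⟨-q, ?_, ?_⟩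
  · rw [hq]; simp only [map_one, map_neg]; ring
  · rw [Polynomial.natDegree_neg]
    have hr : (rhsP h c0 A B p).natDegree ≤ M + 2 := by
      rw [Polynomial.natDegree_le_iff_coeff_eq_zero]
      intro k hk
      obtain ⟨k, rfl⟩ : ∃ k', k = k' + 1 + 1 := ⟨k - 2, by omega⟩
      have z : ∀ j, M < j → p.coeff j = 0 := fun j hj =>
        Polynomial.coeff_eq_zero_of_natDegree_lt (by omega)
      simp only [rhsP, Polynomial.coeff_sub, Polynomial.coeff_add, Polynomial.coeff_C_mul,
        Polynomial.coeff_X_mul, theta_coeff]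
      rw [z _ (show M < k by omega), z _ (show M < k + 1 by omega),
        z _ (show M < k + 1 + 1 by omega)]
      ring
    have hm1 : (Polynomial.X - Polynomial.C (1 : ℂ)).Monic := Polynomial.monic_X_sub_C _
    have hm2 : (Polynomial.X - Polynomial.C (-1 : ℂ)).Monic := Polynomial.monic_X_sub_C _
    rcases eq_or_ne q 0 with rfl | hq0
    · simp
    rw [hq, (hm1.mul hm2).natDegree_mul' hq0, hm1.natDegree_mul hm2, Polynomial.natDegree_X_sub_C,
      Polynomial.natDegree_X_sub_C] at hr
    omega

lemma coeff_X_mul_zero (q : Polynomial ℂ) (s : ℕ) (hq : ∀ j < s, q.coeff j = 0) :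
    ∀ j ≤ s, (Polynomial.X * q).coeff j = 0 := by
  intro j hj
  cases j with
  | zero => simp
  | succ j => rw [Polynomial.coeff_X_mul]; exact hq j (by omega)

lemma low_coeffs (h c0 A B : ℂ) (p b : Polynomial ℂ) (s : ℕ) (hp : ∀ j < s, p.coeff j = 0)
    (hb : b - Polynomial.X * (Polynomial.X * b) = rhsP h c0 A B p) :
    (∀ j < s, b.coeff j = 0) ∧
      b.coeff s = ((c0 - h * s) ^ 2 - h * A * (c0 - h * s)) * p.coeff s := by
  have ht : ∀ j < s, (theta h c0 p).coeff j = 0 := fun j hj => by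
    rw [theta_coeff, hp j hj, mul_zero]
  have htt : ∀ j < s, (theta h c0 (theta h c0 p)).coeff j = 0 := fun j hj => by
    rw [theta_coeff, ht j hj, mul_zero]
  have x1 := coeff_X_mul_zero _ s ht
  have x2 := coeff_X_mul_zero _ s (fun j hj => x1 j hj.le)
  have y1 := coeff_X_mul_zero _ s htt
  have y2 := coeff_X_mul_zero _ s (fun j hj => y1 j hj.le)
  have main : ∀ j ≤ s, b.coeff j = (Polynomial.X * (Polynomial.X * b)).coeff j +
      ((c0 - h * j) ^ 2 - h * A * (c0 - h * j)) * p.coeff j := by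
    intro j hj
    have := congrArg (fun q => Polynomial.coeff q j) hb
    simp only [rhsP, Polynomial.coeff_sub, Polynomial.coeff_add, Polynomial.coeff_C_mul] at this
    rw [x1 j hj, x2 j hj, y2 j hj, theta_coeff, theta_coeff] at this
    linear_combination this
  have lo : ∀ j < s, b.coeff j = 0 := by
    intro j
    induction j using Nat.strong_induction_on with
    | _ j ih =>
      intro hj
      have z1 := coeff_X_mul_zero b j (fun k hk => ih k hk (by omega))
      have z2 := coeff_X_mul_zero _ j (fun k hk => z1 k hk.le)
      rw [main j hj.le, z2 j le_rfl, hp j hj]; simp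
  refine ⟨lo, ?_⟩
  have z1 := coeff_X_mul_zero b s lo
  have z2 := coeff_X_mul_zero _ s (fun k hk => z1 k hk.le)
  rw [main s le_rfl, z2 s le_rfl, zero_add]

lemma Mom_sub_smul {h c0 e : ℂ} {k : ℕ} {p q : Polynomial ℂ} (a : ℂ) (H1 : Mom h c0 e k q)
    (H2 : Mom h c0 e k p) : Mom h c0 e k (q - Polynomial.C a * p) := by
  intro t ht
  rw [Lam_sub, Lam_C_mul, H1 t ht, H2 t ht]; simp

lemma no_kernel (N m n i : ℕ) (hN : 1 ≤ N) (hi1 : 1 ≤ i) (hi2 : i ≤ 2 * N - 1) (hiN : i ≠ N)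
    (p : Polynomial ℂ) (hp : p.natDegree ≤ m + n) (hp0 : p.coeff 0 = 0)
    (H1 : Mom (2 * N) ((m + n) * N + i) 1 m p) (H2 : Mom (2 * N) ((m + n) * N + i) (-1) n p) :
    p = 0 := by
  have hh : (2 * N : ℂ) ≠ 0 := by
    have : (N : ℂ) ≠ 0 := by exact_mod_cast (by omega : N ≠ 0)
    exact mul_ne_zero (by norm_num) this
  set h : ℂ := 2 * N with hh'
  set c0 : ℂ := (m + n) * N + i with hc0
  have claim : ∀ d s : ℕ, 1 ≤ s → s + d = m + n + 1 → ∀ p : Polynomial ℂ, p.natDegree ≤ m + n →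
      (∀ j < s, p.coeff j = 0) → Mom h c0 1 m p → Mom h c0 (-1) n p → p = 0 := by
    intro d
    induction d with
    | zero =>
      intro s hs hsd p hp hlow _ _
      ext j
      by_cases hj : j < s
      · rw [hlow j hj]; simp
      · rw [Polynomial.coeff_eq_zero_of_natDegree_lt (by omega)]; simp
    | succ d ih =>
      intro s hs hsd p hp hlow H1 H2
      by_cases hps : p.coeff s = 0
      · refine ih (s + 1) (by omega) (by omega) p hp ?_ H1 H2
        intro j hj
        rcases (show j ≤ s by omega).eq_or_lt with rfl | hj
        · exact hps
        · exact hlow j hj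
      exfalso
      have hAB1 : ((m : ℂ) + n) + 1 * ((m : ℂ) - n) = 2 * m := by ring
      have hAB2 : ((m : ℂ) + n) + (-1) * ((m : ℂ) - n) = 2 * n := by ring
      obtain ⟨b, hb, hbd⟩ := exists_b h c0 (m + n) (m - n) m n (m + n) hAB1 hAB2 p hp H1 H2
      obtain ⟨lo, bs⟩ := low_coeffs h c0 _ _ p b s hlow hb
      have B1 := Mom_step h c0 1 _ _ hh (by norm_num) p b m hAB1 hb H1
      have B2 := Mom_step h c0 (-1) _ _ hh (by norm_num) p b n hAB2 hb H2
      set lam : ℂ := (c0 - h * s) ^ 2 - h * (m + n) * (c0 - h * s) with hlam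
      have hz : b - Polynomial.C lam * p = 0 := by
        refine ih (s + 1) (by omega) (by omega) _ ?_ ?_ (Mom_sub_smul _ B1 H1)
          (Mom_sub_smul _ B2 H2)
        · exact (Polynomial.natDegree_sub_le _ _).trans
            (max_le hbd ((Polynomial.natDegree_C_mul_le _ _).trans hp))
        · intro j hj
          rw [Polynomial.coeff_sub, Polynomial.coeff_C_mul]
          rcases (show j ≤ s by omega).eq_or_lt with rfl | hj
          · rw [bs]; ring
          · rw [lo j hj, hlow j hj]; ring
      have hbp : b = Polynomial.C lam * p := sub_eq_zero.mp hz
      set r := p.natDegree with hr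
      have hpne : p ≠ 0 := by rintro rfl; simp at hps
      have hpr : p.coeff r ≠ 0 := by
        rw [hr]; exact Polynomial.leadingCoeff_ne_zero.mpr hpne
      have hsr : s ≤ r := by
        by_contra hlt
        exact hps (Polynomial.coeff_eq_zero_of_natDegree_lt (by omega))
      have top := congrArg (fun q => Polynomial.coeff q (r + 1 + 1)) hb
      simp only [rhsP, hbp, Polynomial.coeff_sub, Polynomial.coeff_add, Polynomial.coeff_C_mul,
        Polynomial.coeff_X_mul, theta_coeff] at top
      rw [Polynomial.coeff_eq_zero_of_natDegree_lt (show p.natDegree < r + 1 by omega),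
        Polynomial.coeff_eq_zero_of_natDegree_lt (show p.natDegree < r + 1 + 1 by omega)] at top
      have e1 : (lam - ((c0 - h * r) ^ 2 + h * (m + n) * (c0 - h * r))) * p.coeff r = 0 := by
        linear_combination -top
      have e2 := (mul_eq_zero.mp e1).resolve_right hpr
      have e3 : ((2 * c0 - h * s - h * r)) * (h * ((r : ℂ) - s - (m + n))) = 0 := by
        rw [← e2, hlam]; ring
      rcases mul_eq_zero.mp e3 with e | e
      · have e' : ((2 * ((m + n) * N + i) - 2 * N * s - 2 * N * r : ℤ) : ℂ) = 0 := by
          rw [← e]; push_cast [hh', hc0]; ring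
        have e4 : (2 * ((m + n) * N + i) - 2 * N * s - 2 * N * r : ℤ) = 0 := by exact_mod_cast e'
        have e5 : (i : ℤ) = N * (s + r - m - n) := by linarith
        have hpos : (0 : ℤ) < s + r - m - n := by
          by_contra hc
          have : (N : ℤ) * (s + r - m - n) ≤ 0 :=
            mul_nonpos_of_nonneg_of_nonpos (by omega) (by omega)
          omega
        rcases (show (s + r - m - n : ℤ) = 1 ∨ (2 : ℤ) ≤ s + r - m - n by omega) with h1 | h1
        · rw [h1] at e5; omega
        · have : (N : ℤ) * 2 ≤ N * (s + r - m - n) := mul_le_mul_of_nonneg_left h1 (by omega)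
          omega
      · have e' := (mul_eq_zero.mp e).resolve_left hh
        have e4 : ((r : ℤ) - s - (m + n) : ℤ) = 0 := by exact_mod_cast e'
        omega
  exact claim (m + n) 1 le_rfl (by omega) p hp (fun j hj => by
    rw [show j = 0 by omega]; exact hp0) H1 H2

lemma cVal_eq (N m n i s : ℕ) : cVal N m n i s = ((m + n) * N + i : ℂ) - 2 * N * s := by
  unfold cVal; ring

lemma moments (N m n i : ℕ) (hnm : n ≤ m) (x : ℕ → ℂ)
    (hx : ∀ t, 1 ≤ t → t ≤ m + n →
      ∑ s ∈ Finset.range (m + n + 1), x s * Aentry N m n i t s = 0) :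
    (∀ t < m, ∑ s ∈ Finset.range (m + n + 1), x s * cVal N m n i s ^ (2 * t + 1) = 0) ∧
    (∀ t < n, ∑ s ∈ Finset.range (m + n + 1),
      x s * (-1) ^ s * cVal N m n i s ^ (2 * t + 1) = 0) := by
  have hev : ∀ t < n, ∑ s ∈ Finset.range (m + n + 1),
      x s * (if Even s then cVal N m n i s ^ (2 * t + 1) else 0) = 0 := by
    intro t ht
    refine Eq.trans ?_ (hx (t + 1) (by omega) (by omega))
    refine Finset.sum_congr rfl (fun s _ => ?_)
    rw [Aentry, if_pos (show t + 1 ≤ n by omega), show 2 * (t + 1) - 1 = 2 * t + 1 by omega]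
  have hod : ∀ t < n, ∑ s ∈ Finset.range (m + n + 1),
      x s * (if ¬ Even s then cVal N m n i s ^ (2 * t + 1) else 0) = 0 := by
    intro t ht
    refine Eq.trans ?_ (hx (n + t + 1) (by omega) (by omega))
    refine Finset.sum_congr rfl (fun s _ => ?_)
    rw [Aentry, if_neg (show ¬ n + t + 1 ≤ n by omega), if_pos (show n + t + 1 ≤ 2 * n by omega),
      show 2 * (n + t + 1 - n) - 1 = 2 * t + 1 by omega]
  constructor
  · intro t ht
    by_cases htn : t < n
    · have hs := congrArg₂ (· + ·) (hev t htn) (hod t htn)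
      simp only [add_zero, ← Finset.sum_add_distrib] at hs
      refine Eq.trans ?_ hs
      refine Finset.sum_congr rfl (fun s _ => ?_)
      by_cases hs : Even s <;> simp [hs]
    · refine Eq.trans ?_ (hx (n + t + 1) (by omega) (by omega))
      refine Finset.sum_congr rfl (fun s _ => ?_)
      rw [Aentry, if_neg (by omega), if_neg (by omega),
        show 2 * (n + t + 1 - n) - 1 = 2 * t + 1 by omega]
  · intro t ht
    have hs := congrArg₂ (· - ·) (hev t ht) (hod t ht)
    simp only [sub_zero, ← Finset.sum_sub_distrib] at hs
    refine Eq.trans ?_ hs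
    refine Finset.sum_congr rfl (fun s _ => ?_)
    by_cases hs : Even s
    · simp [hs]
    · simp [hs, (Nat.not_even_iff_odd.mp hs).neg_one_pow]

lemma Lam_sum (h c0 e : ℂ) (f : ℂ → ℂ) (x : ℕ → ℂ) (S : Finset ℕ) :
    Lam h c0 e f (∑ s ∈ S, Polynomial.monomial s (x s)) =
      ∑ s ∈ S, x s * (e ^ s * f (c0 - h * s)) := by
  classical
  induction S using Finset.induction_on with
  | empty => simp [Lam]
  | insert a S ha ih => rw [Finset.sum_insert ha, Finset.sum_insert ha, Lam_add, ih, Lam_monomial]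

lemma det_ne_zero (N m n i : ℕ) (hN : 1 ≤ N) (hnm : n ≤ m)
    (hi1 : 1 ≤ i) (hi2 : i ≤ 2 * N - 1) (hiN : i ≠ N) :
    (A1mat N m n i).det ≠ 0 := by
  intro hdet
  obtain ⟨v, hv0, hv⟩ := Matrix.exists_mulVec_eq_zero_iff.mpr hdet
  let y : ℕ → ℂ := fun s => if hs : s < m + n then v ⟨s, hs⟩ else 0
  let x : ℕ → ℂ := fun s => Nat.casesOn s 0 y
  have hx0 : x 0 = 0 := rfl
  have hxs : ∀ s, x (s + 1) = y s := fun s => rfl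
  have hy : ∀ s : Fin (m + n), y s = v s := fun s => by simp [y]
  have hx : ∀ t, 1 ≤ t → t ≤ m + n →
      ∑ s ∈ Finset.range (m + n + 1), x s * Aentry N m n i t s = 0 := by
    intro t ht1 ht2
    rw [Finset.sum_range_succ', hx0, zero_mul, add_zero, Finset.sum_range]
    have := congrFun hv ⟨t - 1, by omega⟩
    simp only [Matrix.mulVec, dotProduct, A1mat, Matrix.of_apply, Pi.zero_apply,
      Nat.sub_add_cancel ht1] at this
    rw [← this]
    refine Finset.sum_congr rfl (fun s _ => ?_)
    rw [hxs, hy]; ring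
  obtain ⟨M1, M2⟩ := moments N m n i hnm x hx
  set p : Polynomial ℂ := ∑ s ∈ Finset.range (m + n + 1), Polynomial.monomial s (x s) with hpdef
  have hcoef : ∀ s < m + n + 1, p.coeff s = x s := by
    intro s hs
    rw [hpdef, Polynomial.finsetSum_coeff]
    simp only [Polynomial.coeff_monomial]
    rw [Finset.sum_ite_eq' , if_pos (Finset.mem_range.mpr hs)]
  have hp : p = 0 := by
    refine no_kernel N m n i hN hi1 hi2 hiN p ?_ (by rw [hcoef 0 (by omega), hx0]) ?_ ?_
    · refine Polynomial.natDegree_sum_le_of_forall_le _ _ (fun s hs => ?_)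
      exact (Polynomial.natDegree_monomial_le _).trans (by have := Finset.mem_range.mp hs; omega)
    · intro t ht
      rw [hpdef, Lam_sum, ← M1 t ht]
      refine Finset.sum_congr rfl (fun s _ => ?_)
      rw [cVal_eq]; simp
    · intro t ht
      rw [hpdef, Lam_sum, ← M2 t ht]
      refine Finset.sum_congr rfl (fun s _ => ?_)
      rw [cVal_eq]; ring
  apply hv0
  funext s
  have := hcoef ((s : ℕ) + 1) (by omega)
  rw [hp, hxs, hy] at this
  simpa using this.symm

/-- normalized cofactors -/
def cof (N m n i s : ℕ) : ℂ :=
  if hs : s < m + n + 1 then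
    (-1) ^ s * (Matrix.of fun t u : Fin (m + n) =>
      Aentry N m n i ((t : ℕ) + 1) ((Fin.succAbove ⟨s, hs⟩ u : Fin (m + n + 1)) : ℕ)).det
      * ((A1mat N m n i).det)⁻¹
  else 0

lemma det_expand {S : Type*} [CommRing S] (f : ℂ →+* S) (g : ℕ → S) (N m n i : ℕ) :
    f ((A1mat N m n i).det)⁻¹ * (Matrix.of fun t s : Fin (m + n + 1) =>
      if (t : ℕ) = 0 then g s else f (Aentry N m n i t s)).det =
      ∑ s ∈ Finset.range (m + n + 1), f (cof N m n i s) * g s := by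
  rw [Matrix.det_succ_row_zero, Finset.sum_range, Finset.mul_sum]
  refine Finset.sum_congr rfl (fun s _ => ?_)
  have : (Matrix.of fun t s : Fin (m + n + 1) =>
      if (t : ℕ) = 0 then g s else f (Aentry N m n i t s)).submatrix Fin.succ s.succAbove =
      f.mapMatrix (Matrix.of fun t u : Fin (m + n) =>
      Aentry N m n i ((t : ℕ) + 1) ((Fin.succAbove s u : Fin (m + n + 1)) : ℕ)) := by
    ext t u
    simp
  rw [this, ← RingHom.map_det, cof, dif_pos s.2]
  simp only [map_mul, map_pow, map_neg, map_one, Matrix.of_apply, Fin.val_zero, if_true, Fin.eta]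
  ring

lemma cof_zero (N m n i : ℕ) (h : (A1mat N m n i).det ≠ 0) : cof N m n i 0 = 1 := by
  have : (Matrix.of fun t u : Fin (m + n) =>
      Aentry N m n i ((t : ℕ) + 1) ((Fin.succAbove ⟨0, by omega⟩ u : Fin (m + n + 1)) : ℕ)) =
      A1mat N m n i := by
    ext t u
    simp [A1mat, Fin.succAbove]
  rw [cof, dif_pos (by omega), this]
  simp [h]

lemma cof_rows (N m n i t : ℕ) (h1 : 1 ≤ t) (h2 : t ≤ m + n) :
    ∑ s ∈ Finset.range (m + n + 1), cof N m n i s * Aentry N m n i t s = 0 := by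
  have := det_expand (RingHom.id ℂ) (fun s => Aentry N m n i t s) N m n i
  simp only [RingHom.id_apply] at this
  rw [← this]
  refine mul_eq_zero_of_right _
    (Matrix.det_zero_of_row_eq (i := (0 : Fin (m + n + 1))) (j := ⟨t, by omega⟩) ?_ ?_)
  · intro h; have := congrArg Fin.val h; simp at this; omega
  · funext s
    simp only [Matrix.of_apply, Fin.val_zero, if_true]
    rw [if_neg (by omega)]

lemma choose_poly (d l : ℕ) : ∃ P : Polynomial ℂ, (∀ A B : ℕ, A + B = d →
      P.eval ((A : ℂ) - B) = (A.choose l : ℂ) - (B.choose l : ℂ)) ∧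
      (∀ t, P.coeff (2 * t) = 0) ∧ (∀ t, l < t → P.coeff t = 0) := by
  let D : Polynomial ℂ := Polynomial.C ((l.factorial : ℂ)⁻¹) * descPochhammer ℂ l
  let L : Polynomial ℂ := Polynomial.C (1 / 2) * Polynomial.X + Polynomial.C ((d : ℂ) / 2)
  let Q : Polynomial ℂ := D.comp L
  have hQ : Q.natDegree ≤ l := by
    refine Polynomial.natDegree_comp_le.trans ?_
    have h1 : D.natDegree ≤ l :=
      (Polynomial.natDegree_C_mul_le _ _).trans (descPochhammer_natDegree ℂ l).le
    have h2 : L.natDegree ≤ 1 := Polynomial.natDegree_linear_le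
    calc D.natDegree * L.natDegree ≤ l * 1 := Nat.mul_le_mul h1 h2
      _ = l := by simp
  have hc : ∀ t, (Q - Q.comp (Polynomial.C (-1) * Polynomial.X)).coeff t =
      Q.coeff t * (1 - (-1) ^ t) := by
    intro t
    rw [Polynomial.coeff_sub, Polynomial.comp_C_mul_X_coeff]; ring
  refine ⟨Q - Q.comp (Polynomial.C (-1) * Polynomial.X), ?_, ?_, ?_⟩
  · intro A B hAB
    have hd : (d : ℂ) = A + B := by rw [← hAB]; push_cast; ring
    have e1 : 1 / 2 * ((A : ℂ) - B) + d / 2 = A := by rw [hd]; ring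
    have e2 : 1 / 2 * (-1 * ((A : ℂ) - B)) + d / 2 = B := by rw [hd]; ring
    simp only [Q, D, L, Polynomial.eval_sub, Polynomial.eval_comp, Polynomial.eval_mul,
      Polynomial.eval_add, Polynomial.eval_C, Polynomial.eval_X]
    rw [e1, e2, Nat.cast_choose_eq_descPochhammer_div, Nat.cast_choose_eq_descPochhammer_div]
    field_simp
  · intro t; rw [hc]; simp
  · intro t ht
    rw [hc, Polynomial.coeff_eq_zero_of_natDegree_lt (by omega), zero_mul]

lemma choose_sum_zero (k d l : ℕ) (hl : l < 2 * k + 1) (S : Finset ℕ) (α : ℕ → ℂ) (A B : ℕ → ℕ)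
    (hd : ∀ s ∈ S, A s + B s = d)
    (H : ∀ t < k, ∑ s ∈ S, α s * ((A s : ℂ) - B s) ^ (2 * t + 1) = 0) :
    ∑ s ∈ S, α s * (((A s).choose l : ℂ) - ((B s).choose l : ℂ)) = 0 := by
  obtain ⟨P, h1, h2, h3⟩ := choose_poly d l
  have : ∑ s ∈ S, α s * (((A s).choose l : ℂ) - ((B s).choose l : ℂ)) =
      ∑ j ∈ P.support, P.coeff j * ∑ s ∈ S, α s * ((A s : ℂ) - B s) ^ j := by
    simp only [Finset.mul_sum]
    rw [Finset.sum_comm]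
    refine Finset.sum_congr rfl (fun s hs => ?_)
    rw [← h1 _ _ (hd s hs), Polynomial.eval_eq_sum, Polynomial.sum_def, Finset.mul_sum]
    exact Finset.sum_congr rfl (fun _ _ => by ring)
  rw [this]
  refine Finset.sum_eq_zero (fun j _ => ?_)
  rcases Nat.even_or_odd' j with ⟨t, rfl | rfl⟩
  · rw [h2]; simp
  · by_cases ht : t < k
    · rw [H t ht]; simp
    · rw [h3 _ (by omega)]; simp

lemma expand_pow (y u : R2) (A B d : ℕ) (h : A + B = d) :
    (u + y) ^ A * y ^ B = ∑ l ∈ Finset.range (d + 1), C ((A.choose l : ℂ)) * (u ^ l * y ^ (d - l)) := by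
  have hsub : Finset.range (A + 1) ⊆ Finset.range (d + 1) :=
    Finset.range_subset_range.mpr (by omega)
  rw [← Finset.sum_subset hsub, add_pow, Finset.sum_mul]
  · refine Finset.sum_congr rfl (fun l hl => ?_)
    have := Finset.mem_range.mp hl
    rw [show d - l = (A - l) + B by omega, pow_add]
    simp only [map_natCast]
    ring
  · intro l _ hl
    rw [Nat.choose_eq_zero_of_lt (by simpa using hl)]
    simp

lemma dvd_main (k d : ℕ) (S : Finset ℕ) (α : ℕ → ℂ) (A B : ℕ → ℕ) (z y : R2)
    (hd : ∀ s ∈ S, A s + B s = d)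
    (H : ∀ t < k, ∑ s ∈ S, α s * ((A s : ℂ) - B s) ^ (2 * t + 1) = 0) :
    (z - y) ^ (2 * k + 1) ∣ ∑ s ∈ S, C (α s) * (z ^ A s * y ^ B s - y ^ A s * z ^ B s) := by
  have e : ∑ s ∈ S, C (α s) * (z ^ A s * y ^ B s - y ^ A s * z ^ B s) =
      ∑ l ∈ Finset.range (d + 1), C (∑ s ∈ S, α s * (((A s).choose l : ℂ) - ((B s).choose l : ℂ)))
        * ((z - y) ^ l * y ^ (d - l)) := by
    simp only [map_sum, Finset.sum_mul]
    rw [Finset.sum_comm]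
    refine Finset.sum_congr rfl (fun s hs => ?_)
    have h1 := expand_pow y (z - y) (A s) (B s) d (hd s hs)
    have h2 := expand_pow y (z - y) (B s) (A s) d (by rw [add_comm]; exact hd s hs)
    rw [sub_add_cancel] at h1 h2
    rw [h1, mul_comm (y ^ A s), h2, ← Finset.sum_sub_distrib, Finset.mul_sum]
    refine Finset.sum_congr rfl (fun l _ => ?_)
    simp only [map_mul, map_sub]
    ring
  rw [e]
  refine Finset.dvd_sum (fun l _ => ?_)
  by_cases hl : l < 2 * k + 1
  · rw [choose_sum_zero k d l hl S α A B hd H]; simp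
  · exact Dvd.dvd.mul_left (Dvd.dvd.mul_right (pow_dvd_pow _ (by omega)) _) _

lemma eps_ne (N : ℕ) : eps N ≠ 0 := Complex.exp_ne_zero _

lemma eps_pow (N : ℕ) (hN : 1 ≤ N) : eps N ^ N = -1 := by
  have : (N : ℂ) ≠ 0 := by exact_mod_cast (by omega : N ≠ 0)
  rw [eps, ← Complex.exp_nat_mul, mul_div_cancel₀ _ this, Complex.exp_pi_mul_I]

/-- moments of the two kinds, twisted by the parity of `j` -/
lemma mom_twist (N m n i j : ℕ) (a : ℕ → ℂ)
    (M1 : ∀ t < m, ∑ s ∈ Finset.range (m + n + 1), a s * cVal N m n i s ^ (2 * t + 1) = 0)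
    (M2 : ∀ t < n, ∑ s ∈ Finset.range (m + n + 1),
      a s * (-1) ^ s * cVal N m n i s ^ (2 * t + 1) = 0) :
    ∀ t < mult m n j, ∑ s ∈ Finset.range (m + n + 1), (a s * (-1) ^ (j * s)) *
      ((((m + n - s) * N + i : ℕ) : ℂ) - ((N * s : ℕ) : ℂ)) ^ (2 * t + 1) = 0 := by
  intro t ht
  have hc : ∀ s ∈ Finset.range (m + n + 1),
      ((((m + n - s) * N + i : ℕ) : ℂ) - ((N * s : ℕ) : ℂ)) = cVal N m n i s := by
    intro s hs
    have := Finset.mem_range.mp hs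
    push_cast [Nat.cast_sub (show s ≤ m + n by omega)]
    rw [cVal]; ring
  rw [mult] at ht
  split_ifs at ht with hj
  · rw [← M1 t ht]
    refine Finset.sum_congr rfl (fun s hs => ?_)
    rw [hc s hs, (hj.mul_right s).neg_one_pow, mul_one]
  · rw [← M2 t ht]
    refine Finset.sum_congr rfl (fun s hs => ?_)
    rw [hc s hs, pow_mul, (Nat.not_even_iff_odd.mp hj).neg_one_pow]

lemma refl_z (N j : ℕ) : dihRefl N j zP = C (eps N ^ j) * wP := by
  simp [dihRefl, zP, wP]

lemma refl_w (N j : ℕ) : dihRefl N j wP = C (eps N ^ j)⁻¹ * zP := by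
  simp [dihRefl, zP, wP]

lemma refl_C (N j : ℕ) (a : ℂ) : dihRefl N j (C a) = C a := by
  rw [← MvPolynomial.algebraMap_eq]; exact (dihRefl N j).commutes a

lemma quasi1 (N m n i : ℕ) (hN : 1 ≤ N) (a : ℕ → ℂ)
    (M1 : ∀ t < m, ∑ s ∈ Finset.range (m + n + 1), a s * cVal N m n i s ^ (2 * t + 1) = 0)
    (M2 : ∀ t < n, ∑ s ∈ Finset.range (m + n + 1),
      a s * (-1) ^ s * cVal N m n i s ^ (2 * t + 1) = 0) :
    IsQuasiInv N m n (∑ s ∈ Finset.range (m + n + 1),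
          C (a s) * (zP ^ ((m + n - s) * N + i) * wP ^ (N * s))) := by
  intro j _
  have D := dvd_main (mult m n j) ((m + n) * N + i) (Finset.range (m + n + 1))
    (fun s => a s * (-1) ^ (j * s)) (fun s => (m + n - s) * N + i) (fun s => N * s)
    zP (C (eps N ^ j) * wP) (fun s hs => by
      have := Finset.mem_range.mp hs
      obtain ⟨r, hr⟩ : ∃ r, m + n = s + r := ⟨m + n - s, by omega⟩
      simp only [hr, Nat.add_sub_cancel_left]; ring) (mom_twist N m n i j a M1 M2)
  rw [← dvd_neg] at D
  convert D using 1
  rw [map_sum, ← Finset.sum_sub_distrib, ← Finset.sum_neg_distrib]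
  refine Finset.sum_congr rfl (fun s _ => ?_)
  simp only [map_mul (dihRefl N j), map_pow (dihRefl N j), refl_z, refl_w, refl_C]
  have h0 := eps_ne N
  have p1 : (eps N ^ j) ^ (N * s) = (-1) ^ (j * s) := by
    rw [← pow_mul, show j * (N * s) = N * (j * s) by ring, pow_mul, eps_pow N hN]
  have p2 : ((eps N ^ j)⁻¹) ^ (N * s) = (-1) ^ (j * s) := by
    rw [inv_pow, p1, ← inv_pow]; norm_num
  have p3 : (C ((-1 : ℂ) ^ (j * s)) * C ((-1 : ℂ) ^ (j * s)) : R2) = 1 := by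
    rw [← C_mul, ← mul_pow]; norm_num
  simp only [mul_pow, ← map_pow C, p2]
  rw [map_mul, show (eps N ^ j) ^ (N * s) = (-1) ^ (j * s) from p1]
  linear_combination (-(C (a s) * (zP ^ ((m + n - s) * N + i) * wP ^ (N * s)))) * (- p3)

lemma quasi2 (N m n i : ℕ) (hN : 1 ≤ N) (a : ℕ → ℂ)
    (M1 : ∀ t < m, ∑ s ∈ Finset.range (m + n + 1), a s * cVal N m n i s ^ (2 * t + 1) = 0)
    (M2 : ∀ t < n, ∑ s ∈ Finset.range (m + n + 1),
      a s * (-1) ^ s * cVal N m n i s ^ (2 * t + 1) = 0) :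
    IsQuasiInv N m n (∑ s ∈ Finset.range (m + n + 1),
          C (a s) * (wP ^ ((m + n - s) * N + i) * zP ^ (N * s))) := by
  intro j _
  have D := dvd_main (mult m n j) ((m + n) * N + i) (Finset.range (m + n + 1))
    (fun s => a s * (-1) ^ (j * s)) (fun s => (m + n - s) * N + i) (fun s => N * s)
    zP (C (eps N ^ j) * wP) (fun s hs => by
      have := Finset.mem_range.mp hs
      obtain ⟨r, hr⟩ : ∃ r, m + n = s + r := ⟨m + n - s, by omega⟩
      simp only [hr, Nat.add_sub_cancel_left]; ring) (mom_twist N m n i j a M1 M2)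
  replace D := Dvd.dvd.mul_left D (C ((eps N ^ j)⁻¹ ^ ((m + n) * N + i)))
  convert D using 1
  rw [map_sum, ← Finset.sum_sub_distrib, Finset.mul_sum]
  refine Finset.sum_congr rfl (fun s hs => ?_)
  simp only [map_mul (dihRefl N j), map_pow (dihRefl N j), refl_z, refl_w, refl_C]
  have h0 : eps N ^ j ≠ 0 := pow_ne_zero _ (eps_ne N)
  have hd : (m + n) * N + i = ((m + n - s) * N + i) + N * s := by
    have := Finset.mem_range.mp hs
    obtain ⟨r, hr⟩ : ∃ r, m + n = s + r := ⟨m + n - s, by omega⟩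
    simp only [hr, Nat.add_sub_cancel_left]; ring
  rw [hd]
  generalize (m + n - s) * N + i = A
  have p1 : (eps N ^ j) ^ (N * s) = (-1) ^ (j * s) := by
    rw [← pow_mul, show j * (N * s) = N * (j * s) by ring, pow_mul, eps_pow N hN]
  have p2 : ((eps N ^ j)⁻¹) ^ (N * s) = (-1) ^ (j * s) := by
    rw [inv_pow, p1, ← inv_pow]; norm_num
  have p3 : (C ((-1 : ℂ) ^ (j * s)) * C ((-1 : ℂ) ^ (j * s)) : R2) = 1 := by
    rw [← C_mul, ← mul_pow]; norm_num
  have p4 : (C ((eps N ^ j)⁻¹ ^ A) * C ((eps N ^ j) ^ A) : R2) = 1 := by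
    rw [← C_mul, ← mul_pow, inv_mul_cancel₀ h0]; simp
  rw [pow_add, p2]
  simp only [mul_pow, ← map_pow C, p1]
  rw [map_mul, map_mul]
  generalize (C ((eps N ^ j)⁻¹ ^ A) : R2) = E at *
  generalize (C ((eps N ^ j) ^ A) : R2) = E' at *
  generalize (C ((-1 : ℂ) ^ (j * s)) : R2) = F at *
  linear_combination (-(C (a s)) * E * zP ^ A * wP ^ (N * s) * F
     + C (a s) * E * E' * wP ^ A * zP ^ (N * s)) * p3
     + (C (a s) * wP ^ A * zP ^ (N * s)) * p4

theorem determinant_formulas (N m n i : ℕ) (hN : 1 ≤ N) (hnm : n ≤ m)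
    (hi1 : 1 ≤ i) (hi2 : i ≤ 2 * N - 1) (hiN : i ≠ N) :
    (A1mat N m n i).det ≠ 0 ∧
    (∃ a : ℕ → ℂ, a 0 = 1 ∧
      C ((A1mat N m n i).det)⁻¹ * (Amat N m n i).det =
        ∑ s ∈ Finset.range (m + n + 1),
          C (a s) * zP ^ ((m + n - s) * N + i) * wP ^ (N * s)) ∧
    IsQuasiInv N m n (C ((A1mat N m n i).det)⁻¹ * (Amat N m n i).det) ∧
    (∃ b : ℕ → ℂ, b 0 = 1 ∧
      C ((A1mat N m n i).det)⁻¹ * (AmatBar N m n i).det =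
        ∑ s ∈ Finset.range (m + n + 1),
          C (b s) * wP ^ ((m + n - s) * N + i) * zP ^ (N * s)) ∧
    IsQuasiInv N m n (C ((A1mat N m n i).det)⁻¹ * (AmatBar N m n i).det) := by
  have hdet := det_ne_zero N m n i hN hnm hi1 hi2 hiN
  obtain ⟨M1, M2⟩ := moments N m n i hnm (cof N m n i) (cof_rows N m n i)
  have E1 : C ((A1mat N m n i).det)⁻¹ * (Amat N m n i).det =
      ∑ s ∈ Finset.range (m + n + 1),
        C (cof N m n i s) * (zP ^ ((m + n - s) * N + i) * wP ^ (N * s)) :=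
    det_expand (C : ℂ →+* R2) (fun s => zP ^ ((m + n - s) * N + i) * wP ^ (N * s)) N m n i
  have E2 : C ((A1mat N m n i).det)⁻¹ * (AmatBar N m n i).det =
      ∑ s ∈ Finset.range (m + n + 1),
        C (cof N m n i s) * (wP ^ ((m + n - s) * N + i) * zP ^ (N * s)) :=
    det_expand (C : ℂ →+* R2) (fun s => wP ^ ((m + n - s) * N + i) * zP ^ (N * s)) N m n i
  refine ⟨hdet, ⟨cof N m n i, cof_zero N m n i hdet, ?_⟩, ?_,
    ⟨cof N m n i, cof_zero N m n i hdet, ?_⟩, ?_⟩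
  · rw [E1]; exact Finset.sum_congr rfl (fun _ _ => by ring)
  · rw [E1]; exact quasi1 N m n i hN _ M1 M2
  · rw [E2]; exact Finset.sum_congr rfl (fun _ _ => by ring)
  · rw [E2]; exact quasi2 N m n i hN _ M1 M2
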